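/- arXiv:1608.05999 — 4 statements merged into one kernel-verified Lean document; each statement's English description precedes it below -/
import Mathlib

section
/- For any continuous map f : [0,1] → [0,1], the set of periodic points of f is dense in the set of recurrent points of f; that is, every recurrent point of f is a limit of periodic points of f. -/
/-!
Fix a connected set `J` containing no periodic points. By the intermediate value theorem applied to
`f^[n]` and the identity, each iterate `f^[n]` with `n ≥ 1` moves all points of `J` in the same
direction (`lt_iterate_of_lt_iterate`). If `x` and `f^[m] x` lie in `J` with `x < f^[m] x`, iterating
shows that every `f^[m * k]` moves `J` upwards. So if also `y` and `f^[n] y` lie in `J`, then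
`f^[n] y < y` is impossible: otherwise, by the order-dual argument, `f^[m * n]` would move `J`
downwards as well.

Suppose now that `x` is recurrent and `J` is a connected neighbourhood of `x` without periodic
points. Some `f^[m] x` lies in `J`, say with `x < f^[m] x`, and by recurrence some later `f^[n] x`
lies in `J` below `f^[m] x`. Then `y = f^[m] x` is moved up by `f^[m]` and down by `f^[n - m]`, in
contradiction with the above.
-/

section Interval

variable {α : Type*} [LinearOrder α] [TopologicalSpace α] [OrderClosedTopology α]
  {f : α → α} {J : Set α}

/-- On a connected set free of periodic points, an iterate of `f` moves all points in the same
direction: otherwise the intermediate value theorem gives a fixed point of that iterate. -/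
lemma lt_iterate_of_lt_iterate (hf : Continuous f) (hJ : IsPreconnected J)
    (hper : ∀ p ∈ J, ∀ k ≥ 1, f^[k] p ≠ p) {n : ℕ} (hn : 1 ≤ n) {x y : α}
    (hx : x ∈ J) (hy : y ∈ J) (h : x < f^[n] x) : y < f^[n] y := by
  by_contra! hlt
  obtain ⟨p, hp, hpe⟩ := hJ.intermediate_value₂ hx hy continuousOn_id
    (hf.iterate n).continuousOn h.le hlt
  exact hper p hp n hn hpe.symm

lemma lt_iterate_mul (hf : Continuous f) (hJ : IsPreconnected J)
    (hper : ∀ p ∈ J, ∀ k ≥ 1, f^[k] p ≠ p) {m : ℕ} (hm : 1 ≤ m) {x : α}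
    (hx : x ∈ J) (hmx : f^[m] x ∈ J) (h : x < f^[m] x) {k : ℕ} (hk : 1 ≤ k) :
    x < f^[m * k] x := by
  induction k, hk using Nat.le_induction with
  | base => simpa using h
  | succ k hk ih =>
    rw [Nat.mul_succ, Function.iterate_add_apply]
    exact h.trans (lt_iterate_of_lt_iterate hf hJ hper (Nat.mul_pos hm hk) hx hmx ih)

/-- Two returns to a connected set free of periodic points go in the same direction. -/
lemma not_iterate_lt_of_lt_iterate (hf : Continuous f) (hJ : IsPreconnected J)
    (hper : ∀ p ∈ J, ∀ k ≥ 1, f^[k] p ≠ p) {m n : ℕ} (hm : 1 ≤ m) (hn : 1 ≤ n) {x y : α}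
    (hx : x ∈ J) (hmx : f^[m] x ∈ J) (hy : y ∈ J) (hny : f^[n] y ∈ J) (h : x < f^[m] x) :
    ¬ f^[n] y < y := by
  intro h'
  have h₁ : x < f^[m * n] x := lt_iterate_mul hf hJ hper hm hx hmx h hn
  have h₂ : f^[n * m] y < y :=
    lt_iterate_mul (α := αᵒᵈ) (f := f) (J := J) hf hJ hper hn hy hny h' hm
  rw [mul_comm] at h₂
  exact h₂.not_gt (lt_iterate_of_lt_iterate hf hJ hper (Nat.mul_pos hm hn) hx hy h₁)

/-- A recurrent point cannot return upwards to a connected neighbourhood free of periodic points;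
the downward case is the order dual. -/
lemma not_lt_iterate_of_recurrent (hf : Continuous f) (hJ : IsPreconnected J)
    (hper : ∀ p ∈ J, ∀ k ≥ 1, f^[k] p ≠ p) {x : α} (hJx : J ∈ nhds x)
    (hx : x ∈ closure {y | ∃ n : ℕ, n ≥ 1 ∧ f^[n] x = y}) {m : ℕ} (hm : 1 ≤ m)
    (hmx : f^[m] x ∈ J) : ¬ x < f^[m] x := by
  intro h
  have hxJ : x ∈ J := mem_of_mem_nhds hJx
  -- Since `x` is not periodic, a small neighbourhood avoids its first `m` iterates.
  have havoid : ∀ᶠ z in nhds x, ∀ i ∈ Finset.Icc 1 m, f^[i] x ≠ z := by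
    rw [Filter.eventually_all_finset]
    intro i hi
    filter_upwards [isOpen_ne.mem_nhds (hper x hxJ i (Finset.mem_Icc.1 hi).1).symm] with z hz
    exact Ne.symm hz
  obtain ⟨_, ⟨⟨hzJ, hzm⟩, hza⟩, n, hn, rfl⟩ := mem_closure_iff_nhds.1 hx _
    (Filter.inter_mem (Filter.inter_mem hJx (Iio_mem_nhds h)) havoid)
  have hmn : m < n := by
    by_contra! hle
    exact hza n (Finset.mem_Icc.2 ⟨hn, hle⟩) rfl
  have he : f^[n - m] (f^[m] x) = f^[n] x := by
    rw [← Function.iterate_add_apply, Nat.sub_add_cancel hmn.le]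
  refine not_iterate_lt_of_lt_iterate hf hJ hper hm (n := n - m) (by omega) hxJ hmx hmx ?_ h ?_
  · rwa [he]
  · rwa [he]

end Interval

/-- For any continuous map `f : [0,1] → [0,1]`, every recurrent point of `f`
(i.e. a point in the closure of its own forward orbit `{fⁿ(x) : n ≥ 1}`)
lies in the closure of the set of periodic points of `f`. -/
theorem periodic_points_dense_in_recurrent
    (f : Set.Icc (0:ℝ) 1 → Set.Icc (0:ℝ) 1) (hf : Continuous f)
    (x : Set.Icc (0:ℝ) 1) (hx : x ∈ closure {y | ∃ n : ℕ, n ≥ 1 ∧ f^[n] x = y}) :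
    x ∈ closure {p : Set.Icc (0:ℝ) 1 | ∃ k : ℕ, k ≥ 1 ∧ f^[k] p = p} := by
  by_contra hcl
  obtain ⟨ε, hε, hball⟩ := Metric.mem_nhds_iff.1 (isClosed_closure.isOpen_compl.mem_nhds hcl)
  have hJx : Metric.ball x ε ∈ nhds x := Metric.ball_mem_nhds x hε
  have hJ : IsPreconnected (Metric.ball x ε) := by
    -- The ball is the trace on `[0,1]` of a real ball, hence an intersection of two intervals.
    rw [← Topology.IsInducing.subtypeVal.isPreconnected_image]
    have himg : Subtype.val '' Metric.ball x ε = Metric.ball (x : ℝ) ε ∩ Set.Icc 0 1 := by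
      change Subtype.val '' (Subtype.val ⁻¹' Metric.ball (x : ℝ) ε) = _
      rw [Subtype.image_preimage_coe, Set.inter_comm]
    rw [himg, Real.ball_eq_Ioo]
    exact (Set.ordConnected_Ioo.inter Set.ordConnected_Icc).isPreconnected
  have hper : ∀ p ∈ Metric.ball x ε, ∀ k ≥ 1, f^[k] p ≠ p :=
    fun p hp k hk he => hball hp (subset_closure ⟨k, hk, he⟩)
  obtain ⟨_, hmx, m, hm, rfl⟩ := mem_closure_iff_nhds.1 hx _ hJx
  rcases lt_trichotomy x (f^[m] x) with h | h | h
  · exact not_lt_iterate_of_recurrent hf hJ hper hJx hx hm hmx h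
  · exact hper x (mem_of_mem_nhds hJx) m hm h.symm
  · exact not_lt_iterate_of_recurrent (α := (Set.Icc (0:ℝ) 1)ᵒᵈ) (f := f)
      (J := Metric.ball x ε) hf hJ hper hJx hx hm hmx h
end

section
/- For every a ∈ (1, 2) there exists b₀ > 0 such that for every real b with 0 < |b| < b₀ the following holds for the Hénon map H_{a,b}(x,y) = (1 − a x² + y, −b x): H_{a,b} has a unique fixed point p in the rectangle (−3, −1/2 − 1/a) × (−1, 1), and for every z ∈ ℝ², writing z_n = H_{a,b}ⁿ(z), at least one of the following occurs: (i) ‖z_n‖ → ∞ as n → ∞; (ii) z_n → p as n → ∞; (iii) there exists n ≥ 1 with z_n ∈ S, where S = {(x,y) ∈ ℝ² : |x| < 1/2 + 1/a and |y| < 1/2 − a/4}. -/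
/-!
The first coordinates `X n` of an orbit satisfy `X (n+2) = 1 - a * X (n+1)^2 - b * X n`, and the
second coordinates are `-b * X n` shifted by one, so everything reduces to this scalar recurrence,
a small perturbation of `x ↦ 1 - a x²`.

* If at some time `3 ≤ |X (n+1)|` and `|X n| ≤ |X (n+1)|`, the quadratic term dominates from then on
  and the orbit escapes geometrically (`henon_escape`).
* Otherwise `|X|` strictly decreases as long as it is at least `3`. It cannot stay there forever,
  because a bounded sequence that the recurrence expands must tend to `0`
  (`tendsto_zero_of_expanding`); and once below `3` it stays below `3` (`henon_eventually_bounded`).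
  Then the second coordinate is at most `3|b|`, and `X ≤ 1 + 3|b| < c` with `c = 1/2 + 1/a`. So
  either `|X| < c` at some time, and the orbit is in the trapping region, or `X ≤ -c` for all
  large times.
* In the last case `u = X - p.1` satisfies `u (n+2) = -a (X (n+1) + p.1) u (n+1) - b u n` with
  coefficient `-a (X (n+1) + p.1) ≥ 2ac = a + 2 > 3`. The linear recurrence is expanding and `u` is
  bounded, so `u → 0` (again `tendsto_zero_of_expanding`) and the orbit converges to `p`.

The fixed point comes from the intermediate value theorem for `a x² + (1+b) x - 1` on `[-3, -c]`;
two roots below `-c` would have sum `-(1+b)/a`, which is larger than `-2c`.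
-/


/-- The Hénon map `H_{a,b}(x,y) = (1 − a x² + y, −b x)`. -/
def henonMap (a b : ℝ) : ℝ × ℝ → ℝ × ℝ :=
  fun p => (1 - a * p.1 ^ 2 + p.2, -b * p.1)

/-- The trapping region `S = {(x,y) : |x| < 1/2 + 1/a, |y| < 1/2 − a/4}`. -/
def henonTrap (a : ℝ) : Set (ℝ × ℝ) :=
  {p : ℝ × ℝ | |p.1| < 1 / 2 + 1 / a ∧ |p.2| < 1 / 2 - a / 4}

/-- A bounded sequence that is expanded at each step, up to a small contribution of the past,
tends to `0`: a bound `B` from some time on improves to `(5/8) B` one step later. -/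
theorem tendsto_zero_of_expanding (u : ℕ → ℝ) (B : ℝ) (hB : ∀ n, u n ≤ B) (h0 : ∀ n, 0 ≤ u n)
    (h : ∀ n, 2 * u (n + 1) ≤ u (n + 2) + u n / 4) :
    Filter.Tendsto u Filter.atTop (nhds 0) := by
  have key : ∀ k n, u (n + k) ≤ (5 / 8) ^ k * B := by
    intro k
    induction k with
    | zero => intro n; simpa using hB n
    | succ k ih =>
      intro n
      have h1 := h (n + k)
      have h2 := ih n
      have h3 := ih (n + 2)
      rw [show n + 2 + k = n + k + 2 by ring] at h3
      rw [show n + (k + 1) = n + k + 1 by ring, pow_succ]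
      linarith
  refine squeeze_zero h0 (fun k => by simpa using key k 0) ?_
  have := (tendsto_pow_atTop_nhds_zero_of_lt_one (r := (5 / 8 : ℝ)) (by norm_num)
    (by norm_num)).mul_const B
  simpa using this

/-- The triangle-inequality lower bound for one step of the recurrence. -/
theorem henon_step_lower {a b x y z : ℝ} (ha : 1 < a) (hb : |b| < 1 / 12)
    (h : z = 1 - a * y ^ 2 - b * x) : |y| ^ 2 ≤ |z| + 1 + |x| / 12 := by
  have h1 : |b * x| ≤ |x| / 12 := by
    rw [abs_mul]; nlinarith [abs_nonneg x]
  have h2 := neg_abs_le z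
  have h3 := neg_abs_le (b * x)
  rw [sq_abs]
  nlinarith [sq_nonneg y]

theorem henon_escape {a b : ℝ} (ha : 1 < a) (hb : |b| < 1 / 12) (X : ℕ → ℝ)
    (hX : ∀ n, X (n + 2) = 1 - a * X (n + 1) ^ 2 - b * X n) (n : ℕ)
    (h3 : 3 ≤ |X (n + 1)|) (hle : |X n| ≤ |X (n + 1)|) :
    Filter.Tendsto (fun n => |X n|) Filter.atTop Filter.atTop := by
  have key : ∀ k, 3 * (3 / 2 : ℝ) ^ k ≤ |X (n + 1 + k)| ∧ |X (n + k)| ≤ |X (n + 1 + k)| := by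
    intro k
    induction k with
    | zero => simpa using ⟨h3, hle⟩
    | succ k ih =>
      obtain ⟨i1, i2⟩ := ih
      have hs := henon_step_lower ha hb (hX (n + k))
      have h1 : (1 : ℝ) ≤ (3 / 2 : ℝ) ^ k := one_le_pow₀ (by norm_num)
      rw [show n + 1 + (k + 1) = n + k + 2 by ring, show n + (k + 1) = n + k + 1 by ring, pow_succ]
      rw [show n + 1 + k = n + k + 1 by ring] at i1 i2
      have h4 : (3 / 2) * |X (n + k + 1)| ≤ |X (n + k + 2)| := by nlinarith
      constructor <;> linarith
  rw [← Filter.tendsto_add_atTop_iff_nat (n + 1)]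
  refine Filter.tendsto_atTop_mono (f := fun k : ℕ => 3 * (3 / 2 : ℝ) ^ k) (fun k => ?_) ?_
  · have := (key k).1
    rwa [show n + 1 + k = k + (n + 1) by ring] at this
  · exact (tendsto_pow_atTop_atTop_of_one_lt (by norm_num)).const_mul_atTop (by norm_num)

/-- Without an escape time the orbit ends up in `|x| < 3` and stays there. -/
theorem henon_eventually_bounded {a b : ℝ} (ha : 1 < a) (hb : |b| < 1 / 12) (X : ℕ → ℝ)
    (hX : ∀ n, X (n + 2) = 1 - a * X (n + 1) ^ 2 - b * X n)
    (hne : ∀ n, 3 ≤ |X (n + 1)| → |X (n + 1)| < |X n|) :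
    ∃ N, ∀ m, |X (N + m)| < 3 := by
  have hex : ∃ N, |X N| < 3 := by
    by_contra! hall
    have hanti : Antitone fun n => |X n| :=
      antitone_nat_of_succ_le fun n => (hne n (hall _)).le
    have h0 : Filter.Tendsto (fun n => |X n|) Filter.atTop (nhds 0) := by
      refine tendsto_zero_of_expanding _ |X 0| (fun n => hanti (Nat.zero_le n))
        (fun n => abs_nonneg _) fun n => ?_
      have hs := henon_step_lower ha hb (hX n)
      have h1 := hall (n + 1)
      have h2 := hall n
      nlinarith
    have := ge_of_tendsto' h0 hall
    norm_num at this
  obtain ⟨N, hN⟩ := hex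
  refine ⟨N, fun m => ?_⟩
  induction m with
  | zero => exact hN
  | succ m ih =>
    by_contra! hm
    have := hne (N + m) hm
    rw [← add_assoc] at hm
    linarith

theorem henon_fixed_point {a b : ℝ} (ha : 1 < a) (ha2 : a < 2) (hb : |b| < (2 - a) / 12) :
    ∃ x : ℝ, -3 < x ∧ x < -1 / 2 - 1 / a ∧ a * x ^ 2 + (1 + b) * x - 1 = 0 := by
  obtain ⟨hb1, hb2⟩ := abs_lt.mp hb
  have hi : a * (1 / a) = 1 := by field_simp
  have hi1 : 1 / a < 1 := by rw [div_lt_one (by linarith)]; exact ha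
  have hi0 : 0 < 1 / a := by positivity
  set i := 1 / a
  have hc : ContinuousOn (fun x : ℝ => a * x ^ 2 + (1 + b) * x - 1)
      (Set.Icc (-3) (-1 / 2 - i)) := by fun_prop
  have himg := intermediate_value_Ioo' (by linarith) hc
  have hq : a * (-1 / 2 - i) ^ 2 = a / 4 + 1 + i := by
    linear_combination (1 + i) * hi
  have hmem : (0 : ℝ) ∈ Set.Ioo (a * (-1 / 2 - i) ^ 2 + (1 + b) * (-1 / 2 - i) - 1)
      (a * (-3) ^ 2 + (1 + b) * (-3) - 1) := by
    constructor
    · rw [hq]; nlinarith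
    · nlinarith
  obtain ⟨x, ⟨hx1, hx2⟩, hx⟩ := himg hmem
  exact ⟨x, hx1, hx2, hx⟩

/-- An orbit staying in `(-3, -c]`, where `c = 1/2 + 1/a`, converges to the
fixed point in first coordinate. -/
theorem henon_tendsto_fixed {a b q : ℝ} (ha : 1 < a) (hb : |b| < 1 / 12) (X : ℕ → ℝ)
    (hX : ∀ n, X (n + 2) = 1 - a * X (n + 1) ^ 2 - b * X n)
    (hq3 : -3 < q) (hqc : q < -1 / 2 - 1 / a) (hq : a * q ^ 2 + (1 + b) * q - 1 = 0)
    (hX3 : ∀ n, -3 < X n) (hXc : ∀ n, X n ≤ -1 / 2 - 1 / a) :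
    Filter.Tendsto X Filter.atTop (nhds q) := by
  have hi : a * (1 / a) = 1 := by field_simp
  have hi0 : 0 < 1 / a := by positivity
  rw [tendsto_iff_dist_tendsto_zero]
  refine tendsto_zero_of_expanding _ 3 (fun n => ?_) (fun n => dist_nonneg) fun n => ?_
  · rw [Real.dist_eq, abs_le]
    constructor <;> linarith [hX3 n, hXc n]
  · simp only [Real.dist_eq]
    have hrec : -a * (X (n + 1) + q) * (X (n + 1) - q) = (X (n + 2) - q) + b * (X n - q) := by
      rw [hX]; linear_combination hq
    have hcoef : 2 ≤ -a * (X (n + 1) + q) := by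
      nlinarith [hXc (n + 1)]
    calc 2 * |X (n + 1) - q| ≤ (-a * (X (n + 1) + q)) * |X (n + 1) - q| := by gcongr
      _ = |(X (n + 2) - q) + b * (X n - q)| := by
        rw [← hrec, abs_mul (-a * _), abs_of_nonneg (by linarith : 0 ≤ -a * (X (n + 1) + q))]
      _ ≤ |X (n + 2) - q| + |b| * |X n - q| := by rw [← abs_mul]; exact abs_add_le _ _
      _ ≤ |X (n + 2) - q| + |X n - q| / 4 := by nlinarith [abs_nonneg (X n - q)]

/-- For `a ∈ (1,2)` and `b ≠ 0` small, the Hénon map `H_{a,b}` has a unique fixed point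
`p` in `(−3, −1/2 − 1/a) × (−1, 1)`, and every forward orbit either escapes to infinity,
converges to `p`, or enters the trapping region `S`. -/
theorem henon_orbit_trichotomy :
    ∀ a : ℝ, a ∈ Set.Ioo (1 : ℝ) 2 → ∃ b₀ : ℝ, 0 < b₀ ∧ ∀ b : ℝ, 0 < |b| → |b| < b₀ →
      ∃ p : ℝ × ℝ,
        (p ∈ Set.Ioo (-3 : ℝ) (-1 / 2 - 1 / a) ×ˢ Set.Ioo (-1 : ℝ) 1 ∧
          henonMap a b p = p ∧
          ∀ q ∈ Set.Ioo (-3 : ℝ) (-1 / 2 - 1 / a) ×ˢ Set.Ioo (-1 : ℝ) 1,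
            henonMap a b q = q → q = p) ∧
        ∀ z : ℝ × ℝ,
          Filter.Tendsto (fun n : ℕ => ‖(henonMap a b)^[n] z‖) Filter.atTop Filter.atTop ∨
          Filter.Tendsto (fun n : ℕ => (henonMap a b)^[n] z) Filter.atTop (nhds p) ∨
          ∃ n : ℕ, n ≥ 1 ∧ (henonMap a b)^[n] z ∈ henonTrap a := by
  rintro a ⟨ha, ha2⟩
  refine ⟨(2 - a) / 12, by linarith, fun b _ hb => ?_⟩
  have hb12 : |b| < 1 / 12 := by linarith
  obtain ⟨hb1, hb2⟩ := abs_lt.mp hb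
  have hi : a * (1 / a) = 1 := by field_simp
  have hi0 : 0 < 1 / a := by positivity
  -- since `3|b| < (2 - a) / 4`, this gives `1 + 3|b| < c` with `c = 1/2 + 1/a`
  have hfold : 1 + (2 - a) / 4 < 1 / 2 + 1 / a := by
    have : 0 < (2 - a) ^ 2 := by nlinarith
    have h4 : 1 / a - 1 / 2 - (2 - a) / 4 = (2 - a) ^ 2 / (4 * a) := by field_simp; ring
    have : 0 < (2 - a) ^ 2 / (4 * a) := by positivity
    linarith
  have hsmall : ∀ x : ℝ, |x| < 3 → |b * x| < (2 - a) / 4 := fun x hx => by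
    rw [abs_mul]; nlinarith [abs_nonneg b, abs_nonneg x]
  obtain ⟨q, hq3, hqc, hq⟩ := henon_fixed_point ha ha2 hb
  have hbq := abs_lt.mp (hsmall q (by rw [abs_lt]; constructor <;> linarith))
  refine ⟨(q, -b * q), ⟨⟨⟨hq3, hqc⟩, ?_, ?_⟩, ?_, ?_⟩, fun z => ?_⟩
  · dsimp only; linarith
  · dsimp only; linarith
  · ext
    · simp only [henonMap]; linear_combination -hq
    · rfl
  · rintro ⟨x, y⟩ ⟨⟨_, hxc⟩, _⟩ hfix
    simp only [henonMap, Prod.mk.injEq] at hfix hxc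
    obtain ⟨h1, h2⟩ := hfix
    have hprod : (x - q) * (a * (x + q) + (1 + b)) = 0 := by
      linear_combination -h1 - h2 - hq
    have hxq : x = q := by
      rcases mul_eq_zero.mp hprod with h | h
      · linarith
      · nlinarith
    rw [← h2, hxq]
  · set X : ℕ → ℝ := fun n => ((henonMap a b)^[n] z).1 with hXdef
    have hY : ∀ n, ((henonMap a b)^[n + 1] z).2 = -b * X n := fun n => by
      rw [Function.iterate_succ_apply']; rfl
    have hX : ∀ n, X (n + 2) = 1 - a * X (n + 1) ^ 2 - b * X n := fun n => by
      have : X (n + 2) = 1 - a * X (n + 1) ^ 2 + ((henonMap a b)^[n + 1] z).2 := by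
        simp only [hXdef]
        rw [Function.iterate_succ_apply' _ (n + 1)]; rfl
      rw [this, hY]; ring
    by_cases hesc : ∃ n, 3 ≤ |X (n + 1)| ∧ |X n| ≤ |X (n + 1)|
    · left
      obtain ⟨n, h3, hle⟩ := hesc
      exact Filter.tendsto_atTop_mono (fun n => norm_fst_le ((henonMap a b)^[n] z))
        (henon_escape ha hb12 X hX n h3 hle)
    · right
      push Not at hesc
      obtain ⟨N, hN⟩ := henon_eventually_bounded ha hb12 X hX hesc
      by_cases hS : ∃ n : ℕ, n ≥ 1 ∧ (henonMap a b)^[n] z ∈ henonTrap a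
      · exact Or.inr hS
      left
      have hout : ∀ m, X (N + 2 + m) ≤ -1 / 2 - 1 / a := fun m => by
        by_contra! hgt
        refine hS ⟨N + 2 + m, by omega, ?_, ?_⟩
        · change |X (N + 2 + m)| < _
          have h1 := hsmall _ (hN m)
          rw [abs_lt] at h1 ⊢
          have h2 := hX (N + m)
          rw [show N + m + 2 = N + 2 + m by ring] at h2
          constructor
          · linarith
          · nlinarith [sq_nonneg (X (N + m + 1))]
        · rw [show N + 2 + m = N + (m + 1) + 1 by ring, hY, neg_mul, abs_neg]
          have := hsmall _ (hN (m + 1))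
          linarith
      have hlim : Filter.Tendsto X Filter.atTop (nhds q) := by
        rw [← Filter.tendsto_add_atTop_iff_nat (N + 2)]
        refine henon_tendsto_fixed (a := a) (b := b) ha hb12 _ (fun n => ?_) hq3 hqc hq
          (fun n => ?_) (fun n => ?_)
        · have := hX (n + (N + 2))
          rwa [show n + (N + 2) + 2 = n + 2 + (N + 2) by ring,
            show n + (N + 2) + 1 = n + 1 + (N + 2) by ring] at this
        · have := (abs_lt.mp (hN (2 + n))).1
          rwa [show N + (2 + n) = n + (N + 2) by ring] at this
        · have := hout n
          rwa [show N + 2 + n = n + (N + 2) by ring] at this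
      refine hlim.prodMk_nhds ?_
      rw [← Filter.tendsto_add_atTop_iff_nat 1]
      simp only [hY]
      exact hlim.const_mul (-b)
end

section
/- Let a ∈ (1, 2), let q : ℝ → ℝ be the quadratic map q(x) = 1 − a x², and let I be the open interval (−3, −1/2 − 1/a). Then q has a unique fixed point in I, namely x₋ = (−1 − √(1 + 4a))/(2a), and for every x ∈ I with x ≠ x₋ there exists n ≥ 1 such that qⁿ(x) ∉ I. -/
/-!
Since `q x - q y = -a (x + y) (x - y)` and every point of `I` lies to the left of `-1/2 - 1/a`, one has
`-a (x + y) > a + 2 > 3` for `x, y ∈ I`: the map expands distances within `I` by a factor of at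
least `3`. Hence `I` contains at most one fixed point, and an orbit staying in `I` forever satisfies
`3 ^ n * |x - xm| ≤ |q^[n] x - xm| < 3` for all `n`, which forces `x = xm`. That `xm` lies in `I`
amounts to `a + 1 < √(1 + 4a) < 6a - 1`, where the left inequality is equivalent to `0 < a < 2`.
-/

/-- For `a ∈ (1,2)`, the quadratic map `q(x) = 1 − a x²` has a unique fixed point
`x₋ = (−1 − √(1 + 4a))/(2a)` in the interval `I = (−3, −1/2 − 1/a)`, and every other
orbit starting in `I` eventually leaves `I`. -/
theorem quadratic_fixed_point_escape (a : ℝ) (ha : a ∈ Set.Ioo (1 : ℝ) 2)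
    (q : ℝ → ℝ) (hq : ∀ x, q x = 1 - a * x ^ 2)
    (I : Set ℝ) (hI : I = Set.Ioo (-3 : ℝ) (-1 / 2 - 1 / a))
    (xm : ℝ) (hxm : xm = (-1 - Real.sqrt (1 + 4 * a)) / (2 * a)) :
    xm ∈ I ∧ q xm = xm ∧ (∀ x ∈ I, q x = x → x = xm) ∧
      ∀ x ∈ I, x ≠ xm → ∃ n : ℕ, n ≥ 1 ∧ q^[n] x ∉ I := by
  obtain ⟨ha1, ha2⟩ := ha
  have ha0 : 0 < a := by linarith
  have memI : ∀ x, x ∈ I ↔ -3 < x ∧ a * x < -a / 2 - 1 := by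
    intro x
    have h : a * (-1 / 2 - 1 / a) = -a / 2 - 1 := by field_simp
    rw [hI, Set.mem_Ioo, ← h, mul_lt_mul_iff_right₀ ha0]
  have hs : Real.sqrt (1 + 4 * a) ^ 2 = 1 + 4 * a := Real.sq_sqrt (by linarith)
  have hs0 : 0 ≤ Real.sqrt (1 + 4 * a) := Real.sqrt_nonneg _
  have hs1 : a + 1 < Real.sqrt (1 + 4 * a) := by
    apply Real.lt_sqrt_of_sq_lt
    nlinarith
  have hs2 : Real.sqrt (1 + 4 * a) < 3 := by nlinarith
  have hax : 2 * (a * xm) = -1 - Real.sqrt (1 + 4 * a) := by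
    rw [hxm]; field_simp
  have hmem : xm ∈ I := by
    rw [memI]
    constructor
    · by_contra! h
      nlinarith
    · linarith
  have hfix : q xm = xm := by
    rw [hq]
    have h : a * (1 - a * xm ^ 2 - xm) = 0 := by
      have e : Real.sqrt (1 + 4 * a) = -1 - 2 * (a * xm) := by linarith
      rw [e] at hs
      linarith
    have := (mul_eq_zero.mp h).resolve_left ha0.ne'
    linarith
  have hexp : ∀ x ∈ I, 3 * |x - xm| ≤ |q x - xm| := by
    intro x hx
    have h1 := ((memI x).1 hx).2
    have h2 := ((memI xm).1 hmem).2
    have e : q x - xm = -(a * x + a * xm) * (x - xm) := by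
      have h := hq xm
      rw [hfix] at h
      rw [hq]
      linear_combination -h
    rw [e, abs_mul]
    apply mul_le_mul_of_nonneg_right _ (abs_nonneg _)
    exact le_trans (by linarith) (le_abs_self _)
  refine ⟨hmem, hfix, ?_, ?_⟩
  · intro x hx hxq
    have h := hexp x hx
    rw [hxq] at h
    have h0 : |x - xm| = 0 := le_antisymm (by linarith) (abs_nonneg _)
    exact sub_eq_zero.mp (abs_eq_zero.mp h0)
  · intro x hx hne
    by_contra! hall
    have hin : ∀ n : ℕ, q^[n] x ∈ I := by
      intro n
      rcases Nat.eq_zero_or_pos n with rfl | hn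
      · exact hx
      · exact hall n hn
    have hgrow : ∀ n : ℕ, 3 ^ n * |x - xm| ≤ |q^[n] x - xm| := by
      intro n
      induction n with
      | zero => simp
      | succ k ih =>
        have h := hexp _ (hin k)
        rw [Function.iterate_succ_apply', pow_succ]
        linarith
    have hpos : 0 < |x - xm| := abs_pos.mpr (sub_ne_zero.mpr hne)
    obtain ⟨n, hn⟩ := pow_unbounded_of_one_lt (3 / |x - xm|) (by norm_num : (1 : ℝ) < 3)
    rw [div_lt_iff₀ hpos] at hn
    -- `I` lies in `(-3, 0)`, so its points are at distance less than `3` from `xm`.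
    have hneg : ∀ y ∈ I, y < 0 := by
      intro y hy
      have h := ((memI y).1 hy).2
      by_contra! h0
      nlinarith
    have hlt : |q^[n] x - xm| < 3 := by
      have h1 := ((memI _).1 (hin n)).1
      have h2 := ((memI _).1 hmem).1
      have h3 := hneg _ (hin n)
      have h4 := hneg _ hmem
      rw [abs_lt]
      constructor <;> linarith
    linarith [hgrow n]
end

section
/- For any continuous map f : [0,1] → [0,1] and any f-invariant Borel probability measure μ on [0,1], the support of μ is contained in the closure of the set of periodic points of f. -/
/-!
By Poincaré recurrence, `μ`-almost every point is recurrent, so every open set of positive measure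
contains a recurrent point. It therefore suffices that a connected open set `J` free of periodic
points contains no recurrent point.

The order enters through this fact: on such a `J` all returns go in the same direction. If `x ∈ J`
and `x < h x ∈ J`, where `h` is an iterate of `f`, then `x < h^k x` for all `k ≥ 1`
(`lt_iterate_of_lt`). Hence if `f^n` moves `x ∈ J` up within `J` and `f^m` moves `y ∈ J` down
within `J`, then `f^(nm)` moves `x` up and `y` down, and the intermediate value theorem gives a
periodic point in `J` (`not_lt_and_gt`). But a non-periodic recurrent point `x ∈ J` comes back to
some `y = f^n x ∈ J`, say with `x < y`, and later returns to `J` below `y`, so `y` moves down.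
-/

/-- If a continuous map moves a point of a connected set `J` without periodic points upwards within
`J`, then all further iterates stay above that point, even when they leave `J`. -/
theorem lt_iterate_of_lt {α : Type*} [LinearOrder α] [TopologicalSpace α]
    [OrderClosedTopology α] {h : α → α} (hc : Continuous h) {J : Set α} (hJ : IsPreconnected J)
    (hper : ∀ p ∈ J, ∀ k ≥ 1, h^[k] p ≠ p) {x : α} (hx : x ∈ J) (hhx : h x ∈ J)
    (hlt : x < h x) : ∀ k ≥ 1, x < h^[k] x := by
  intro k hk
  induction k, hk using Nat.le_induction with
  | base => simpa using hlt
  | succ k hk ih =>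
    by_contra! hle
    rw [Function.iterate_succ_apply] at hle
    -- `h^k` moves `x` up, and moves `h x` down to a point `≤ x`.
    obtain ⟨p, hp, hpe⟩ := hJ.intermediate_value₂ hx hhx continuousOn_id
      (hc.iterate k).continuousOn ih.le (hle.trans hlt.le)
    exact hper p hp k hk hpe.symm

/-- In a connected set without periodic points, two returns cannot go in opposite directions. -/
theorem not_lt_and_gt {α : Type*} [LinearOrder α] [TopologicalSpace α]
    [OrderClosedTopology α] {f : α → α} (hc : Continuous f) {J : Set α} (hJ : IsPreconnected J)
    (hper : ∀ p ∈ J, ∀ k ≥ 1, f^[k] p ≠ p) {x y : α} {n m : ℕ} (hn : 1 ≤ n) (hm : 1 ≤ m)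
    (hx : x ∈ J) (hfx : f^[n] x ∈ J) (hxlt : x < f^[n] x)
    (hy : y ∈ J) (hfy : f^[m] y ∈ J) (hylt : f^[m] y < y) : False := by
  have hper' : ∀ n ≥ 1, ∀ p ∈ J, ∀ k ≥ 1, (f^[n])^[k] p ≠ p := by
    intro n hn p hp k hk
    rw [← Function.iterate_mul]
    exact hper p hp _ (Nat.mul_pos hn hk)
  have h1 : x < (f^[n])^[m] x :=
    lt_iterate_of_lt (hc.iterate n) hJ (hper' n hn) hx hfx hxlt m hm
  have h2 : (f^[m])^[n] y < y :=
    lt_iterate_of_lt (α := αᵒᵈ) (hc.iterate m) hJ (hper' m hm) hy hfy hylt n hn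
  rw [← Function.iterate_mul] at h1 h2
  rw [mul_comm] at h2
  obtain ⟨p, hp, hpe⟩ := hJ.intermediate_value₂ hx hy continuousOn_id
    (hc.iterate (n * m)).continuousOn h1.le h2.le
  exact hper p hp _ (Nat.mul_pos hn hm) hpe.symm

/-- A connected open set containing a recurrent point contains a periodic point. -/
theorem exists_periodic_of_recurrent {α : Type*} [LinearOrder α] [TopologicalSpace α]
    [OrderClosedTopology α] {f : α → α} (hc : Continuous f) {J : Set α} (hJ : IsPreconnected J)
    (hJo : IsOpen J) {x : α} (hx : x ∈ J)
    (hrec : ∀ s ∈ nhds x, ∃ᶠ n in Filter.atTop, f^[n] x ∈ s) :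
    ∃ p ∈ J, ∃ k ≥ 1, f^[k] p = p := by
  by_contra! hper
  obtain ⟨n, hn, hfx⟩ := Filter.frequently_atTop.1 (hrec J (hJo.mem_nhds hx)) 1
  rcases lt_or_gt_of_ne (hper x hx n hn).symm with hlt | hlt
  · obtain ⟨m, hm, hmJ, hmlt⟩ := Filter.frequently_atTop.1
      (hrec (J ∩ Set.Iio (f^[n] x)) (Filter.inter_mem (hJo.mem_nhds hx) (Iio_mem_nhds hlt))) (n + 1)
    have hmn : f^[m - n] (f^[n] x) = f^[m] x := by
      rw [← Function.iterate_add_apply, Nat.sub_add_cancel (by omega)]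
    exact not_lt_and_gt hc hJ hper hn (by omega : 1 ≤ m - n) hx hfx hlt hfx
      (hmn ▸ hmJ) (hmn ▸ hmlt)
  · obtain ⟨m, hm, hmJ, hmlt⟩ := Filter.frequently_atTop.1
      (hrec (J ∩ Set.Ioi (f^[n] x)) (Filter.inter_mem (hJo.mem_nhds hx) (Ioi_mem_nhds hlt))) (n + 1)
    have hmn : f^[m - n] (f^[n] x) = f^[m] x := by
      rw [← Function.iterate_add_apply, Nat.sub_add_cancel (by omega)]
    exact not_lt_and_gt hc hJ hper (by omega : 1 ≤ m - n) hn hfx (hmn ▸ hmJ) (hmn ▸ hmlt)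
      hx hfx hlt

theorem isPreconnected_ball_Icc (x : Set.Icc (0:ℝ) 1) (r : ℝ) :
    IsPreconnected (Metric.ball x r) := by
  rw [← Topology.IsInducing.subtypeVal.isPreconnected_image]
  have : (Subtype.val '' Metric.ball x r : Set ℝ) = Set.Icc 0 1 ∩ Metric.ball (x : ℝ) r := by
    rw [← Subtype.image_preimage_coe]
    rfl
  rw [this, Real.ball_eq_Ioo]
  exact (Set.ordConnected_Icc.inter Set.ordConnected_Ioo).isPreconnected

open MeasureTheory

/-- For a continuous map `f : [0,1] → [0,1]` and an `f`-invariant Borel probability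
measure `μ`, the support of `μ` (the set of points all of whose open neighborhoods have
positive measure) is contained in the closure of the set of periodic points of `f`. -/
theorem support_subset_closure_periodic
    (f : Set.Icc (0:ℝ) 1 → Set.Icc (0:ℝ) 1) (hf : Continuous f)
    (μ : Measure (Set.Icc (0:ℝ) 1)) [IsProbabilityMeasure μ]
    (hinv : ∀ s : Set (Set.Icc (0:ℝ) 1), MeasurableSet s → μ (f ⁻¹' s) = μ s) :
    ∀ x : Set.Icc (0:ℝ) 1, (∀ U : Set (Set.Icc (0:ℝ) 1), IsOpen U → x ∈ U → 0 < μ U) →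
      x ∈ closure {p : Set.Icc (0:ℝ) 1 | ∃ k : ℕ, k ≥ 1 ∧ f^[k] p = p} := by
  intro x hx
  have hmp : MeasurePreserving f μ μ := by
    refine ⟨hf.measurable, Measure.ext fun s hs => ?_⟩
    rw [Measure.map_apply hf.measurable hs, hinv s hs]
  have hrec := hmp.conservative.ae_frequently_mem_of_mem_nhds
  rw [Metric.mem_closure_iff]
  intro ε hε
  have hpos := hx _ Metric.isOpen_ball (Metric.mem_ball_self hε)
  obtain ⟨z, hz, hzrec⟩ := ((frequently_ae_mem_iff.2 hpos.ne').and_eventually hrec).exists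
  obtain ⟨p, hp, hk⟩ := exists_periodic_of_recurrent hf (isPreconnected_ball_Icc x ε)
    Metric.isOpen_ball hz hzrec
  exact ⟨p, hk, by rwa [dist_comm]⟩
end
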